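/- Suppose A has the geometric distribution with parameter 0 < p < 1, i.e., ℙ[A = k] = (1−p)^k · p for k ∈ ℕ (so E[A] = (1−p)/p). Then E[X] < ∞ if and only if p > 1/2, and in that case E[X] = p / (2p − 1). -/

import Mathlib

open MeasureTheory ProbabilityTheory ENNReal

/-!
Taking expectations in `X =_d A * X + B` gives `E[X] = E[A] E[X] + E[B]`, hence
`E[B] / (1 - E[A]) ≤ E[X]`; the reverse inequality is not immediate, since `E[X] = ∞` also solves
the equation. As `A` takes values in `ℕ`, truncation satisfies
`min (A * X + B) t ≤ A * min X t + B`, so that the finite number `E[min X t]` is at most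
`E[A] E[min X t] + E[B]`, and therefore at most `E[B] / (1 - E[A])`. Letting `t → ∞` yields
`E[X] = E[B] / (1 - E[A])` when `E[B] ≠ 0`. The subtraction in `ℝ≥0∞` is truncated, so this reads
`E[X] = ∞` as soon as `E[A] ≥ 1`.
-/

section AffineInequality

variable {a b x : ℝ≥0∞}

theorem div_one_sub_le_of_mul_add_le (h : a * x + b ≤ x) : b / (1 - a) ≤ x := by
  obtain rfl | hx := eq_or_ne x ∞
  · exact le_top
  have hax : a * x ≠ ∞ := ne_top_of_le_ne_top hx (le_self_add.trans h)
  refine ENNReal.div_le_of_le_mul' ?_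
  rw [ENNReal.sub_mul fun _ _ ↦ hx, one_mul]
  exact ENNReal.le_sub_of_add_le_left hax h

theorem le_div_one_sub_of_le_mul_add (hb : b ≠ 0) (hx : x ≠ ∞) (h : x ≤ a * x + b) :
    x ≤ b / (1 - a) := by
  have one_sub_ne_top : 1 - a ≠ ∞ := ENNReal.sub_ne_top one_ne_top
  rw [ENNReal.le_div_iff_mul_le (.inr hb) (.inl one_sub_ne_top), mul_comm,
    ENNReal.sub_mul fun _ _ ↦ hx, one_mul]
  exact tsub_le_iff_left.2 h

theorem min_natCast_mul_add_le (n : ℕ) (x b t : ℝ≥0∞) :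
    min (n * x + b) t ≤ n * min x t + b := by
  obtain rfl | hn := eq_or_ne n 0
  · simp
  obtain hxt | htx := le_total x t
  · rw [min_eq_left hxt]
    exact min_le_left _ _
  · have one_le : (1 : ℝ≥0∞) ≤ n := Nat.one_le_cast.2 (Nat.one_le_iff_ne_zero.2 hn)
    calc min (n * x + b) t ≤ t := min_le_right _ _
      _ ≤ n * t := le_mul_of_one_le_left' one_le
      _ ≤ n * min x t + b := by rw [min_eq_right htx]; exact le_self_add

end AffineInequality

section FixedPoint

variable {Ω : Type*} [MeasurableSpace Ω] {P : Measure Ω}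

theorem lintegral_eq_iSup_lintegral_min_natCast {X : Ω → ℝ≥0∞} (hX : AEMeasurable X P) :
    ∫⁻ ω, X ω ∂P = ⨆ n : ℕ, ∫⁻ ω, min (X ω) n ∂P := by
  have min_mono (ω : Ω) : Monotone fun n : ℕ ↦ min (X ω) n :=
    fun _ _ h ↦ min_le_min_left _ (Nat.cast_le.2 h)
  rw [← lintegral_iSup' (fun n ↦ hX.min aemeasurable_const) (ae_of_all _ min_mono)]
  refine lintegral_congr fun ω ↦ ?_
  rw [← inf_iSup_eq, ENNReal.iSup_natCast, inf_top_eq]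

theorem lintegral_mul_add_of_indepFun {A X : Ω → ℝ≥0∞} (B : Ω → ℝ≥0∞)
    (hA : AEMeasurable A P) (hX : AEMeasurable X P) (hAX : IndepFun A X P) :
    ∫⁻ ω, (A ω * X ω + B ω) ∂P = (∫⁻ ω, A ω ∂P) * ∫⁻ ω, X ω ∂P + ∫⁻ ω, B ω ∂P := by
  rw [lintegral_add_left' (hA.fun_mul hX),
    lintegral_mul_eq_lintegral_mul_lintegral_of_indepFun'' hA hX hAX]

variable {A : Ω → ℕ} {B X : Ω → ℝ≥0∞}

theorem lintegral_min_le_of_identDistrib_mul_add (hA : AEMeasurable A P) (hAX : IndepFun A X P)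
    (hfix : IdentDistrib X (fun ω ↦ A ω * X ω + B ω) P P) (t : ℝ≥0∞) :
    ∫⁻ ω, min (X ω) t ∂P ≤
      (∫⁻ ω, A ω ∂P) * ∫⁻ ω, min (X ω) t ∂P + ∫⁻ ω, B ω ∂P := by
  have measurable_cast : Measurable (Nat.cast : ℕ → ℝ≥0∞) := .of_discrete
  have measurable_trunc : Measurable fun x : ℝ≥0∞ ↦ min x t := by fun_prop
  calc ∫⁻ ω, min (X ω) t ∂P
      = ∫⁻ ω, min (A ω * X ω + B ω) t ∂P := (hfix.comp measurable_trunc).lintegral_eq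
    _ ≤ ∫⁻ ω, (A ω * min (X ω) t + B ω) ∂P :=
        lintegral_mono fun ω ↦ min_natCast_mul_add_le (A ω) (X ω) (B ω) t
    _ = (∫⁻ ω, A ω ∂P) * ∫⁻ ω, min (X ω) t ∂P + ∫⁻ ω, B ω ∂P :=
        lintegral_mul_add_of_indepFun B (measurable_cast.comp_aemeasurable hA)
          (measurable_trunc.comp_aemeasurable hfix.aemeasurable_fst)
          (hAX.comp measurable_cast measurable_trunc)

theorem lintegral_eq_div_one_sub_of_identDistrib_mul_add [IsFiniteMeasure P]
    (hA : AEMeasurable A P) (hAX : IndepFun A X P)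
    (hfix : IdentDistrib X (fun ω ↦ A ω * X ω + B ω) P P) (hB : ∫⁻ ω, B ω ∂P ≠ 0) :
    ∫⁻ ω, X ω ∂P = (∫⁻ ω, B ω ∂P) / (1 - ∫⁻ ω, A ω ∂P) := by
  have measurable_cast : Measurable (Nat.cast : ℕ → ℝ≥0∞) := .of_discrete
  have hX : AEMeasurable X P := hfix.aemeasurable_fst
  apply le_antisymm
  · rw [lintegral_eq_iSup_lintegral_min_natCast hX]
    refine iSup_le fun n ↦ le_div_one_sub_of_le_mul_add hB ?_
      (lintegral_min_le_of_identDistrib_mul_add hA hAX hfix n)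
    exact ne_top_of_le_ne_top (lintegral_const_lt_top (natCast_ne_top n)).ne
      (lintegral_mono fun ω ↦ min_le_right (X ω) n)
  · have lintegral_fix :
        ∫⁻ ω, X ω ∂P = (∫⁻ ω, A ω ∂P) * ∫⁻ ω, X ω ∂P + ∫⁻ ω, B ω ∂P :=
      hfix.lintegral_eq.trans <| lintegral_mul_add_of_indepFun B
        (measurable_cast.comp_aemeasurable hA) hX (hAX.comp measurable_cast measurable_id)
    exact div_one_sub_le_of_mul_add_le lintegral_fix.ge

theorem lintegral_natCast_eq_inv_one_sub_of_map_eq [IsProbabilityMeasure P] {A X : Ω → ℕ}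
    (hA : Measurable A) (hX : Measurable X) (hAX : IndepFun A X P)
    (hfix : P.map X = P.map fun ω ↦ A ω * X ω + 1) :
    ∫⁻ ω, (X ω : ℝ≥0∞) ∂P = (1 - ∫⁻ ω, (A ω : ℝ≥0∞) ∂P)⁻¹ := by
  have measurable_cast : Measurable (Nat.cast : ℕ → ℝ≥0∞) := .of_discrete
  have identDistrib_nat : IdentDistrib X (fun ω ↦ A ω * X ω + 1) P P :=
    ⟨hX.aemeasurable, ((hA.mul hX).add_const 1).aemeasurable, hfix⟩
  have identDistrib_cast :
      IdentDistrib (fun ω ↦ (X ω : ℝ≥0∞)) (fun ω ↦ A ω * (X ω : ℝ≥0∞) + 1) P P := by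
    simpa [Function.comp_def] using identDistrib_nat.comp measurable_cast
  have indepFun_cast : IndepFun A (fun ω ↦ (X ω : ℝ≥0∞)) P :=
    hAX.comp measurable_id measurable_cast
  rw [lintegral_eq_div_one_sub_of_identDistrib_mul_add hA.aemeasurable indepFun_cast
    identDistrib_cast (by simp), lintegral_one, measure_univ, one_div]

end FixedPoint

section Geometric

variable {p : unitInterval}

theorem hasSum_natCast_mul_geometric (hp : p ≠ 0) :
    HasSum (fun n : ℕ ↦ (n : ℝ) * ((1 - p) ^ n * p)) ((1 - p) / p) := by
  have hp_pos : 0 < (p : ℝ) := unitInterval.pos_iff_ne_zero.2 hp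
  have norm_lt_one : ‖1 - (p : ℝ)‖ < 1 := by
    rw [Real.norm_of_nonneg (sub_nonneg.2 p.2.2)]
    linarith
  convert! (hasSum_coe_mul_geometric_of_norm_lt_one norm_lt_one).mul_right (p : ℝ) using 1
  · simp only [mul_assoc]
  · rw [_root_.sub_sub_cancel]
    field_simp

theorem lintegral_natCast_geometricMeasure (hp : p ≠ 0) :
    ∫⁻ n, (n : ℝ≥0∞) ∂geometricMeasure p = ENNReal.ofReal ((1 - p) / p) := by
  have hsum := hasSum_natCast_mul_geometric hp
  rw [lintegral_countable', ← hsum.tsum_eq, ENNReal.ofReal_tsum_of_nonneg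
    (fun n ↦ mul_nonneg n.cast_nonneg (geometricMeasure_nonneg p n)) hsum.summable]
  refine tsum_congr fun n ↦ ?_
  rw [geometricMeasure_singleton hp, ENNReal.ofReal_mul n.cast_nonneg, ENNReal.ofReal_natCast]

end Geometric

theorem lintegral_natCast_of_geometric {Ω : Type*} [MeasurableSpace Ω] {P : Measure Ω}
    {A : Ω → ℕ} (hA : Measurable A) {p : ℝ} (hp0 : 0 < p) (hp1 : p ≤ 1)
    (hgeo : ∀ k : ℕ, P {ω | A ω = k} = ENNReal.ofReal ((1 - p) ^ k * p)) :
    ∫⁻ ω, (A ω : ℝ≥0∞) ∂P = ENNReal.ofReal ((1 - p) / p) := by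
  lift p to unitInterval using ⟨hp0.le, hp1⟩
  have hp : p ≠ 0 := unitInterval.pos_iff_ne_zero.1 hp0
  have map_eq : P.map A = geometricMeasure p := by
    refine Measure.ext_of_singleton fun k ↦ ?_
    rw [Measure.map_apply hA (measurableSet_singleton k), geometricMeasure_singleton hp, ← hgeo k]
    rfl
  rw [← lintegral_natCast_geometricMeasure hp, ← map_eq, lintegral_map .of_discrete hA]

theorem stmt_10 {Ω : Type*} [MeasurableSpace Ω] {P : Measure Ω} [IsProbabilityMeasure P]
    {A X : Ω → ℕ} (hA : Measurable A) (hX : Measurable X)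
    (hAX : IndepFun A X P)
    (h0 : 0 < P {ω | A ω = 0})
    (hfix : Measure.map X P = Measure.map (fun ω => A ω * X ω + 1) P)
    (p : ℝ) (hp0 : 0 < p) (hp1 : p < 1)
    (hgeo : ∀ k : ℕ, P {ω | A ω = k} = ENNReal.ofReal ((1 - p) ^ k * p)) :
    ((∫⁻ ω, (X ω : ℝ≥0∞) ∂P) < ⊤ ↔ 1 / 2 < p) ∧
    (1 / 2 < p → ∫⁻ ω, (X ω : ℝ≥0∞) ∂P = ENNReal.ofReal (p / (2 * p - 1))) := by
  have one_sub_mean : 1 - (1 - p) / p = (2 * p - 1) / p := by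
    field_simp
    ring
  have lintegral_eq : ∫⁻ ω, (X ω : ℝ≥0∞) ∂P = (ENNReal.ofReal ((2 * p - 1) / p))⁻¹ := by
    rw [lintegral_natCast_eq_inv_one_sub_of_map_eq hA hX hAX hfix,
      lintegral_natCast_of_geometric hA hp0 hp1.le hgeo, ← one_sub_mean,
      ENNReal.ofReal_sub _ (div_nonneg (sub_nonneg.2 hp1.le) hp0.le), ENNReal.ofReal_one]
  have ratio_pos_iff : 0 < (2 * p - 1) / p ↔ 1 / 2 < p := by
    rw [div_pos_iff_of_pos_right hp0]
    constructor <;> intro h <;> linarith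
  refine ⟨?_, fun hp ↦ ?_⟩
  · rw [lintegral_eq, ENNReal.inv_lt_top, ENNReal.ofReal_pos, ratio_pos_iff]
  · rw [lintegral_eq, ← ENNReal.ofReal_inv_of_pos (ratio_pos_iff.2 hp), inv_div]
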